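/- For every ε > 0 there exists K > 0 such that for all k ∈ ℂ with |k| ≥ K and all x ∈ [0,ℓ] one has |c'(x,k) + k sin(kx) − cos(kx)·(1/2)∫₀ˣ q(t) dt − (sin(kx)/k)·[ (1/4)(q(x) + q(0)) + (1/8)(∫₀ˣ q(t) dt)² ]| ≤ ε · e^{|Im k| x} / |k|. -/

import Mathlib

open MeasureTheory intervalIntegral Real

lemma gl_dense (ℓ : ℝ) (hℓ : 0 ≤ ℓ) (f : ℝ → ℂ) (hf : IntervalIntegrable f volume 0 ℓ)
    (ε : ℝ) (hε : 0 < ε) :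
    ∃ g : ℝ → ℂ, ContDiff ℝ 1 g ∧ ∫ t in (0:ℝ)..ℓ, ‖f t - g t‖ ≤ ε := by
  have h1 : Integrable f (volume.restrict (Set.Ioc 0 ℓ)) :=
    (intervalIntegrable_iff_integrableOn_Ioc_of_le hℓ).1 hf
  obtain ⟨g, hg1, hg2, hg3⟩ := MemLp.exist_eLpNorm_sub_le (p := 1) (by simp) le_rfl
    (memLp_one_iff_integrable.2 h1) hε
  refine ⟨g, hg2.of_le (by exact_mod_cast le_top), ?_⟩
  have hgi : Integrable g (volume.restrict (Set.Ioc 0 ℓ)) :=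
    (intervalIntegrable_iff_integrableOn_Ioc_of_le hℓ).1 (hg2.continuous.intervalIntegrable 0 ℓ)
  have e : ∫ t in (0:ℝ)..ℓ, ‖f t - g t‖ = ∫ t in (0:ℝ)..ℓ, ‖(f - g) t‖ := rfl
  rw [e, intervalIntegral.integral_of_le hℓ, integral_norm_eq_lintegral_enorm (h1.sub hgi).1]
  rw [eLpNorm_one_eq_lintegral_enorm] at hg3
  exact ENNReal.toReal_le_of_le_ofReal hε.le hg3

lemma gl_int_mono {ℓ x : ℝ} (hx : x ∈ Set.Icc 0 ℓ) {E : Type*} [NormedAddCommGroup E] {f : ℝ → E}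
    (hf : IntervalIntegrable f volume 0 ℓ) : IntervalIntegrable f volume 0 x := by
  apply hf.mono_set
  rw [Set.uIcc_of_le hx.1, Set.uIcc_of_le (hx.1.trans hx.2)]
  exact Set.Icc_subset_Icc_right hx.2

/-- weighted L1 bound -/
lemma gl_L1 {ℓ x : ℝ} (hx : x ∈ Set.Icc 0 ℓ) {f : ℝ → ℂ} (hf : IntervalIntegrable f volume 0 ℓ)
    (φ : ℝ → ℂ) (hφ : Continuous φ) (C : ℝ) (hC0 : 0 ≤ C) (hC : ∀ t ∈ Set.Icc 0 x, ‖φ t‖ ≤ C) :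
    ‖∫ t in (0:ℝ)..x, φ t * f t‖ ≤ C * ∫ t in (0:ℝ)..ℓ, ‖f t‖ := by
  have hfx := gl_int_mono hx hf
  calc ‖∫ t in (0:ℝ)..x, φ t * f t‖ ≤ ∫ t in (0:ℝ)..x, ‖φ t * f t‖ :=
        intervalIntegral.norm_integral_le_integral_norm hx.1
    _ ≤ ∫ t in (0:ℝ)..x, C * ‖f t‖ := by
        apply intervalIntegral.integral_mono_on hx.1
        · exact (hfx.continuousOn_mul hφ.continuousOn).norm
        · exact hfx.norm.const_mul C
        · intro t ht
          rw [norm_mul]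
          exact mul_le_mul_of_nonneg_right (hC t ht) (norm_nonneg _)
    _ = C * ∫ t in (0:ℝ)..x, ‖f t‖ := by simp
    _ ≤ C * ∫ t in (0:ℝ)..ℓ, ‖f t‖ := by
        apply mul_le_mul_of_nonneg_left _ hC0
        apply intervalIntegral.integral_mono_interval le_rfl hx.1 hx.2
        · exact Filter.Eventually.of_forall fun t => norm_nonneg _
        · exact hf.norm

lemma gl_ibp {x : ℝ} (hx0 : 0 ≤ x) {f : ℝ → ℂ} (hf : IntervalIntegrable f volume 0 x)
    (φ φ' : ℝ → ℂ) (hφ : ∀ t, HasDerivAt φ (φ' t) t) (hφ' : Continuous φ') :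
    ∫ t in (0:ℝ)..x, φ' t * (∫ s in (0:ℝ)..t, f s) =
      φ x * (∫ s in (0:ℝ)..x, f s) - ∫ t in (0:ℝ)..x, φ t * f t := by
  have hφc : Continuous φ := continuous_iff_continuousAt.2 fun t => (hφ t).continuousAt
  obtain ⟨C, hC⟩ := isCompact_Icc.exists_bound_of_continuousOn (hφc.continuousOn (s := Set.Icc 0 x))
  obtain ⟨C', hC'⟩ := isCompact_Icc.exists_bound_of_continuousOn (hφ'.continuousOn (s := Set.Icc 0 x))
  have hxx : x ∈ Set.Icc 0 x := ⟨hx0, le_rfl⟩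
  have hC0 : 0 ≤ C := (norm_nonneg _).trans (hC x hxx)
  have hC'0 : 0 ≤ C' := (norm_nonneg _).trans (hC' x hxx)
  have prim : ∀ h : ℝ → ℂ, IntervalIntegrable h volume 0 x →
      ContinuousOn (fun t => ∫ s in (0:ℝ)..t, h s) (Set.uIcc 0 x) := by
    intro h hh
    exact intervalIntegral.continuousOn_primitive_interval' hh (by simp)
  have key : ∀ ε > 0, ‖(∫ t in (0:ℝ)..x, φ' t * (∫ s in (0:ℝ)..t, f s)) -
      (φ x * (∫ s in (0:ℝ)..x, f s) - ∫ t in (0:ℝ)..x, φ t * f t)‖ ≤ 0 + (C' * x + C + C) * ε := by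
    intro ε hε
    obtain ⟨g, hg, hge⟩ := gl_dense x hx0 f hf ε hε
    have hgi : IntervalIntegrable g volume 0 x := hg.continuous.intervalIntegrable _ _
    have hG : ∫ t in (0:ℝ)..x, φ' t * (∫ s in (0:ℝ)..t, g s) =
      φ x * (∫ s in (0:ℝ)..x, g s) - ∫ t in (0:ℝ)..x, φ t * g t := by
      have := intervalIntegral.integral_mul_deriv_eq_deriv_mul (a := 0) (b := x)
        (u := φ) (u' := φ') (v := fun t => ∫ s in (0:ℝ)..t, g s) (v' := g) (fun t _ => hφ t)
        (fun t _ => hg.continuous.integral_hasStrictDerivAt 0 t |>.hasDerivAt)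
        (hφ'.intervalIntegrable _ _) hgi
      rw [this]; simp
    set h : ℝ → ℂ := fun t => f t - g t with hh
    have hhi : IntervalIntegrable h volume 0 x := hf.sub hgi
    have e1 : ∀ t ∈ Set.Icc 0 x, ∫ s in (0:ℝ)..t, f s = (∫ s in (0:ℝ)..t, h s) + ∫ s in (0:ℝ)..t, g s := by
      intro t ht
      rw [← intervalIntegral.integral_add (gl_int_mono ht hhi) (gl_int_mono ht hgi)]
      simp [hh]
    have e2 : ∫ t in (0:ℝ)..x, φ t * f t = (∫ t in (0:ℝ)..x, φ t * h t) + ∫ t in (0:ℝ)..x, φ t * g t := by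
      rw [← intervalIntegral.integral_add (hhi.continuousOn_mul hφc.continuousOn)
        (hgi.continuousOn_mul hφc.continuousOn)]
      congr 1; ext t; simp only [hh]; ring
    have e3 : ∫ t in (0:ℝ)..x, φ' t * (∫ s in (0:ℝ)..t, f s) =
        (∫ t in (0:ℝ)..x, φ' t * (∫ s in (0:ℝ)..t, h s)) +
        ∫ t in (0:ℝ)..x, φ' t * (∫ s in (0:ℝ)..t, g s) := by
      have i1 : IntervalIntegrable (fun t => φ' t * ∫ s in (0:ℝ)..t, h s) volume 0 x :=
        (hφ'.continuousOn.mul (prim h hhi)).intervalIntegrable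
      have i2 : IntervalIntegrable (fun t => φ' t * ∫ s in (0:ℝ)..t, g s) volume 0 x :=
        (hφ'.continuousOn.mul (prim g hgi)).intervalIntegrable
      rw [← intervalIntegral.integral_add i1 i2]
      apply intervalIntegral.integral_congr
      intro t ht
      rw [Set.uIcc_of_le hx0] at ht
      simp only [e1 t ht]; ring
    rw [e3, e2, e1 x hxx, hG]
    have b0 : ∀ t ∈ Set.Icc 0 x, ‖∫ s in (0:ℝ)..t, h s‖ ≤ ε := by
      intro t ht
      have := gl_L1 ht hhi (fun _ => 1) continuous_const 1 zero_le_one (by simp)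
      simp only [one_mul] at this
      exact this.trans hge
    have b1 : ‖∫ t in (0:ℝ)..x, φ' t * (∫ s in (0:ℝ)..t, h s)‖ ≤ C' * ε * |x - 0| := by
      apply intervalIntegral.norm_integral_le_of_norm_le_const
      intro t ht
      rw [Set.uIoc_of_le hx0] at ht
      rw [norm_mul]
      exact mul_le_mul (hC' t ⟨ht.1.le, ht.2⟩) (b0 t ⟨ht.1.le, ht.2⟩) (norm_nonneg _) hC'0
    rw [sub_zero, abs_of_nonneg hx0] at b1
    have b2 : ‖∫ t in (0:ℝ)..x, φ t * h t‖ ≤ C * ε :=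
      (gl_L1 hxx hhi φ hφc C hC0 hC).trans (mul_le_mul_of_nonneg_left hge hC0)
    have b3 : ‖φ x * ∫ s in (0:ℝ)..x, h s‖ ≤ C * ε := by
      rw [norm_mul]
      exact mul_le_mul (hC x hxx) (b0 x hxx) (norm_nonneg _) hC0
    set P := ∫ t in (0:ℝ)..x, φ' t * (∫ s in (0:ℝ)..t, h s)
    set Q := ∫ t in (0:ℝ)..x, φ t * h t
    set R := ∫ s in (0:ℝ)..x, h s
    calc _ = ‖P - φ x * R + Q‖ := by congr 1; ring
      _ ≤ ‖P‖ + ‖φ x * R‖ + ‖Q‖ := (norm_add_le _ _).trans (by gcongr; exact norm_sub_le _ _)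
      _ ≤ _ := by linarith
  have : ‖(∫ t in (0:ℝ)..x, φ' t * (∫ s in (0:ℝ)..t, f s)) -
      (φ x * (∫ s in (0:ℝ)..x, f s) - ∫ t in (0:ℝ)..x, φ t * f t)‖ ≤ 0 := by
    apply le_of_forall_pos_le_add
    intro δ hδ
    have hp : 0 < C' * x + C + C + 1 := by positivity
    have := key (δ / (C' * x + C + C + 1)) (by positivity)
    refine this.trans ?_
    gcongr
    rw [mul_div_assoc', div_le_iff₀ hp]
    nlinarith
  exact sub_eq_zero.1 (norm_le_zero_iff.1 this)

lemma gl_exp_bound {k : ℂ} {x u : ℝ} (hu : |u| ≤ x) :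
    ‖Complex.exp (Complex.I * k * u)‖ ≤ Real.exp (|k.im| * x) := by
  rw [Complex.norm_exp]
  apply Real.exp_le_exp.2
  have : (Complex.I * k * (u:ℂ)).re = - k.im * u := by simp
  rw [this]
  calc -k.im * u ≤ |-k.im * u| := le_abs_self _
    _ = |k.im| * |u| := by rw [abs_mul, abs_neg]
    _ ≤ _ := by gcongr

lemma gl_cos_bound {k : ℂ} {x u : ℝ} (hu : |u| ≤ x) :
    ‖Complex.cos (k * u)‖ ≤ Real.exp (|k.im| * x) := by
  have h1 := gl_exp_bound (k := k) hu
  have h2 := gl_exp_bound (k := -k) hu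
  rw [Complex.neg_im, abs_neg] at h2
  have : Complex.cos (k * u) = (Complex.exp (Complex.I * k * u) + Complex.exp (Complex.I * (-k) * u)) / 2 := by
    rw [Complex.cos]; congr 3 <;> ring
  rw [this, norm_div]
  have := norm_add_le (Complex.exp (Complex.I * k * u)) (Complex.exp (Complex.I * (-k) * u))
  simp only [Complex.norm_ofNat]
  linarith

lemma gl_sin_bound {k : ℂ} {x u : ℝ} (hu : |u| ≤ x) :
    ‖Complex.sin (k * u)‖ ≤ Real.exp (|k.im| * x) := by
  have h1 := gl_exp_bound (k := k) hu
  have h2 := gl_exp_bound (k := -k) hu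
  rw [Complex.neg_im, abs_neg] at h2
  have : Complex.sin (k * u) = (Complex.exp (Complex.I * (-k) * u) - Complex.exp (Complex.I * k * u)) * Complex.I / 2 := by
    rw [Complex.sin]; congr 4 <;> ring
  rw [this, norm_div, norm_mul]
  have := norm_sub_le (Complex.exp (Complex.I * (-k) * u)) (Complex.exp (Complex.I * k * u))
  simp only [Complex.norm_ofNat, Complex.norm_I]
  linarith

/-- uniform Riemann–Lebesgue -/
lemma gl_RL (ℓ : ℝ) (hℓ : 0 ≤ ℓ) (f : ℝ → ℂ) (hf : IntervalIntegrable f volume 0 ℓ)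
    (ε : ℝ) (hε : 0 < ε) :
    ∃ K > 0, ∀ k : ℂ, K ≤ ‖k‖ → ∀ x ∈ Set.Icc (0:ℝ) ℓ,
      ‖∫ t in (0:ℝ)..x, Complex.sin (k * ((x - 2 * t : ℝ) : ℂ)) * f t‖ ≤ ε * Real.exp (|k.im| * x) := by
  obtain ⟨g, hg, hge⟩ := gl_dense ℓ hℓ f hf (ε / 2) (by positivity)
  have hgi : IntervalIntegrable g volume 0 ℓ := hg.continuous.intervalIntegrable _ _
  have hg'c : Continuous (deriv g) := hg.continuous_deriv le_rfl
  obtain ⟨A, hA⟩ := isCompact_Icc.exists_bound_of_continuousOn (hg.continuous.continuousOn (s := Set.Icc 0 ℓ))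
  obtain ⟨B, hB⟩ := isCompact_Icc.exists_bound_of_continuousOn (hg'c.continuousOn (s := Set.Icc 0 ℓ))
  have h0 : (0:ℝ) ∈ Set.Icc 0 ℓ := ⟨le_rfl, hℓ⟩
  have hA0 : 0 ≤ A := (norm_nonneg _).trans (hA 0 h0)
  have hB0 : 0 ≤ B := (norm_nonneg _).trans (hB 0 h0)
  refine ⟨(A + A + B * ℓ + 1) / ε, by positivity, ?_⟩
  intro k hk x hx
  have hkpos : 0 < ‖k‖ := lt_of_lt_of_le (by positivity) hk
  have hk0 : k ≠ 0 := norm_pos_iff.1 hkpos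
  set τ := Real.exp (|k.im| * x) with hτ
  have hτ0 : 0 < τ := Real.exp_pos _
  have habs : ∀ t ∈ Set.Icc 0 x, |x - 2 * t| ≤ x := by
    intro t ht; rw [abs_le]; constructor <;> linarith [ht.1, ht.2]
  set S : ℝ → ℂ := fun t => Complex.sin (k * ((x - 2 * t : ℝ) : ℂ)) with hS
  have hSc : Continuous S := by
    simp only [hS]
    exact Complex.continuous_sin.comp (continuous_const.mul (Complex.continuous_ofReal.comp (by fun_prop)))
  set φ : ℝ → ℂ := fun t => Complex.cos (k * ((x - 2 * t : ℝ) : ℂ)) / (2 * k) with hφdef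
  have hφ : ∀ t, HasDerivAt φ (S t) t := by
    intro t
    have h1 : HasDerivAt (fun z : ℂ => Complex.cos (k * (x - 2 * z)) / (2 * k))
        (-Complex.sin (k * (x - 2 * t)) * (k * (0 - 2 * 1)) / (2 * k)) (t:ℂ) := by
      have := (((hasDerivAt_id (t:ℂ)).const_mul 2).const_sub (x:ℂ)).const_mul k
      have := (this.ccos).div_const (2 * k)
      simpa using this
    have h2 := h1.comp_ofReal
    convert h2 using 1
    · ext s; simp [hφdef]
    · simp only [hS]; push_cast; field_simp; ring
  have hφb : ∀ t ∈ Set.Icc 0 x, ‖φ t‖ ≤ τ / (2 * ‖k‖) := by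
    intro t ht
    simp only [hφdef]
    rw [norm_div, norm_mul, Complex.norm_ofNat]
    gcongr
    exact gl_cos_bound (habs t ht)
  have hsplit : ∫ t in (0:ℝ)..x, S t * f t = (∫ t in (0:ℝ)..x, S t * (f t - g t)) + ∫ t in (0:ℝ)..x, S t * g t := by
    rw [← intervalIntegral.integral_add ((gl_int_mono hx (hf.sub hgi)).continuousOn_mul hSc.continuousOn)
        ((gl_int_mono hx hgi).continuousOn_mul hSc.continuousOn)]
    congr 1; ext t; ring
  have b1 : ‖∫ t in (0:ℝ)..x, S t * (f t - g t)‖ ≤ τ * (ε / 2) :=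
    (gl_L1 hx (hf.sub hgi) S hSc τ hτ0.le (fun t ht => gl_sin_bound (habs t ht))).trans
      (mul_le_mul_of_nonneg_left hge hτ0.le)
  have hibp : ∫ t in (0:ℝ)..x, S t * g t = φ x * g x - φ 0 * g 0 - ∫ t in (0:ℝ)..x, φ t * deriv g t := by
    have := intervalIntegral.integral_mul_deriv_eq_deriv_mul (a := 0) (b := x)
        (u := φ) (u' := S) (v := g) (v' := deriv g) (fun t _ => hφ t)
        (fun t _ => (hg.differentiable (by simp) t).hasDerivAt)
        (hSc.intervalIntegrable _ _) (hg'c.intervalIntegrable _ _)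
    rw [this]; ring
  have hx0 : (0:ℝ) ∈ Set.Icc 0 x := ⟨le_rfl, hx.1⟩
  have hxx : x ∈ Set.Icc 0 x := ⟨hx.1, le_rfl⟩
  have hT : 0 ≤ τ / (2 * ‖k‖) := by positivity
  have c1 : ‖φ x * g x‖ ≤ τ / (2 * ‖k‖) * A := by
    rw [norm_mul]; exact mul_le_mul (hφb x hxx) (hA x hx) (norm_nonneg _) hT
  have c2 : ‖φ 0 * g 0‖ ≤ τ / (2 * ‖k‖) * A := by
    rw [norm_mul]; exact mul_le_mul (hφb 0 hx0) (hA 0 h0) (norm_nonneg _) hT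
  have c3 : ‖∫ t in (0:ℝ)..x, φ t * deriv g t‖ ≤ τ / (2 * ‖k‖) * B * |x - 0| := by
    apply intervalIntegral.norm_integral_le_of_norm_le_const
    intro t ht
    rw [Set.uIoc_of_le hx.1] at ht
    rw [norm_mul]
    exact mul_le_mul (hφb t ⟨ht.1.le, ht.2⟩) (hB t ⟨ht.1.le, ht.2.trans hx.2⟩) (norm_nonneg _) hT
  rw [sub_zero, abs_of_nonneg hx.1] at c3
  have c4 : τ / (2 * ‖k‖) * B * x ≤ τ / (2 * ‖k‖) * B * ℓ := by gcongr; exact hx.2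
  have b2 : ‖∫ t in (0:ℝ)..x, S t * g t‖ ≤ τ * (ε / 2) := by
    rw [hibp]
    have d1 : τ / (2 * ‖k‖) * (A + A + B * ℓ) ≤ τ * (ε / 2) := by
      rw [div_mul_eq_mul_div, div_le_iff₀ (by positivity)]
      rw [div_le_iff₀ hε] at hk
      nlinarith
    calc _ ≤ ‖φ x * g x‖ + ‖φ 0 * g 0‖ + ‖∫ t in (0:ℝ)..x, φ t * deriv g t‖ :=
          (norm_sub_le _ _).trans (by gcongr; exact norm_sub_le _ _)
      _ ≤ _ := by linarith
  rw [hsplit]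
  refine (norm_add_le _ _).trans ?_
  linarith

lemma gl_sq {x : ℝ} (hx : 0 ≤ x) {q : ℝ → ℂ} (hq : ContinuousOn q (Set.Icc 0 x)) :
    ∫ t in (0:ℝ)..x, q t * (∫ s in (0:ℝ)..t, q s) = (∫ s in (0:ℝ)..x, q s) ^ 2 / 2 := by
  have hqu : ContinuousOn q (Set.uIcc 0 x) := by rwa [Set.uIcc_of_le hx]
  have hi : IntervalIntegrable q volume 0 x := hqu.intervalIntegrable
  have hQ : ContinuousOn (fun t => ∫ s in (0:ℝ)..t, q s) (Set.uIcc 0 x) :=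
    intervalIntegral.continuousOn_primitive_interval' hi (by simp)
  have hd : ∀ t ∈ Set.Ioo (min 0 x) (max 0 x), HasDerivAt (fun t => ∫ s in (0:ℝ)..t, q s) (q t) t := by
    intro t ht
    rw [min_eq_left hx, max_eq_right hx] at ht
    refine intervalIntegral.integral_hasDerivAt_right (gl_int_mono ⟨ht.1.le, ht.2.le⟩ hi) ?_ ?_
    · exact (hq.mono Set.Ioo_subset_Icc_self).stronglyMeasurableAtFilter isOpen_Ioo t ht
    · exact hq.continuousAt (Icc_mem_nhds ht.1 ht.2)
  have := intervalIntegral.integral_mul_deriv_eq_deriv_mul_of_hasDerivAt hQ hQ hd hd hi hi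
  simp only [intervalIntegral.integral_same, mul_zero, sub_zero] at this
  have e : ∫ t in (0:ℝ)..x, (∫ s in (0:ℝ)..t, q s) * q t = ∫ t in (0:ℝ)..x, q t * (∫ s in (0:ℝ)..t, q s) := by
    congr 1; ext t; ring
  rw [e] at this
  linear_combination this / 2

/-- Volterra bound -/
lemma gl_volt {ℓ x M B τ : ℝ} (hx : x ∈ Set.Icc 0 ℓ) (hM : 0 ≤ M) (hB : 0 ≤ B) (φ q h : ℝ → ℂ)
    (hφ : ∀ t ∈ Set.Icc 0 x, ‖φ t‖ ≤ Real.exp (τ * (x - t)))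
    (hq : ∀ t ∈ Set.Icc 0 ℓ, ‖q t‖ ≤ M)
    (hh : ∀ t ∈ Set.Icc 0 ℓ, ‖h t‖ ≤ B * Real.exp (τ * t)) :
    ‖∫ t in (0:ℝ)..x, φ t * q t * h t‖ ≤ M * ℓ * B * Real.exp (τ * x) := by
  have : ‖∫ t in (0:ℝ)..x, φ t * q t * h t‖ ≤ M * B * Real.exp (τ * x) * |x - 0| := by
    apply intervalIntegral.norm_integral_le_of_norm_le_const
    intro t ht
    rw [Set.uIoc_of_le hx.1] at ht
    have ht' : t ∈ Set.Icc 0 ℓ := ⟨ht.1.le, ht.2.trans hx.2⟩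
    rw [norm_mul, norm_mul]
    calc _ ≤ Real.exp (τ * (x - t)) * M * (B * Real.exp (τ * t)) :=
          mul_le_mul (mul_le_mul (hφ t ⟨ht.1.le, ht.2⟩) (hq t ht') (norm_nonneg _) (Real.exp_pos _).le)
            (hh t ht') (norm_nonneg _) (by positivity)
      _ = M * B * (Real.exp (τ * (x - t)) * Real.exp (τ * t)) := by ring
      _ = _ := by rw [← Real.exp_add]; congr 2; ring
  rw [sub_zero, abs_of_nonneg hx.1] at this
  refine this.trans ?_
  calc _ ≤ M * B * Real.exp (τ * x) * ℓ := by gcongr; exact hx.2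
    _ = _ := by ring

theorem gelfand_levitan_c_deriv_asymptotics
    (ℓ : ℝ) (hℓ : 0 < ℓ) (q q' : ℝ → ℝ)
    (hq' : IntervalIntegrable q' volume 0 ℓ)
    (hq : ∀ x ∈ Set.Icc (0 : ℝ) ℓ, q x = q 0 + ∫ t in (0 : ℝ)..x, q' t)
    (c cderiv : ℂ → ℝ → ℂ)
    (hccont : ∀ k : ℂ, k ≠ 0 → ContinuousOn (c k) (Set.Icc 0 ℓ))
    (hc : ∀ k : ℂ, k ≠ 0 → ∀ x ∈ Set.Icc (0 : ℝ) ℓ,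
      c k x = Complex.cos (k * x) +
        ∫ t in (0 : ℝ)..x, (Complex.sin (k * ((x : ℂ) - t)) / k) * (q t : ℂ) * c k t)
    (hcderiv : ∀ k : ℂ, k ≠ 0 → ∀ x ∈ Set.Icc (0 : ℝ) ℓ,
      cderiv k x = -k * Complex.sin (k * x) +
        ∫ t in (0 : ℝ)..x, Complex.cos (k * ((x : ℂ) - t)) * (q t : ℂ) * c k t) :
    ∀ ε > 0, ∃ K > 0, ∀ k : ℂ, K ≤ ‖k‖ → ∀ x ∈ Set.Icc (0 : ℝ) ℓ,
      ‖cderiv k x + k * Complex.sin (k * x)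
          - Complex.cos (k * x) * ((1 / 2 : ℂ) * ∫ t in (0 : ℝ)..x, (q t : ℂ))
          - (Complex.sin (k * x) / k) *
              ((1 / 4 : ℂ) * ((q x : ℂ) + (q 0 : ℂ))
                + (1 / 8 : ℂ) * (∫ t in (0 : ℝ)..x, (q t : ℂ)) ^ 2)‖
        ≤ ε * Real.exp (|k.im| * x) / ‖k‖ := by
  intro ε hε
  set p : ℝ → ℂ := fun t => (q t : ℂ) with hp
  set f : ℝ → ℂ := fun t => (q' t : ℂ) with hfdef
  have hf : IntervalIntegrable f volume 0 ℓ := ⟨hq'.1.ofReal, hq'.2.ofReal⟩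
  have hu : Set.uIcc 0 ℓ = Set.Icc 0 ℓ := Set.uIcc_of_le hℓ.le
  have hpf : ∀ x ∈ Set.Icc 0 ℓ, p x = p 0 + ∫ t in (0:ℝ)..x, f t := by
    intro x hx
    simp only [hp, hfdef]
    rw [hq x hx, intervalIntegral.integral_ofReal]; push_cast; rfl
  have prim : ∀ h : ℝ → ℂ, IntervalIntegrable h volume 0 ℓ →
      ContinuousOn (fun t => ∫ s in (0:ℝ)..t, h s) (Set.Icc 0 ℓ) := by
    intro h hh
    rw [← hu]
    exact intervalIntegral.continuousOn_primitive_interval' hh (by simp)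
  have hpc : ContinuousOn p (Set.Icc 0 ℓ) :=
    ((continuousOn_const (c := p 0)).add (prim f hf)).congr hpf
  have CI : ∀ h : ℝ → ℂ, ContinuousOn h (Set.Icc 0 ℓ) → IntervalIntegrable h volume 0 ℓ := by
    intro h hh; rw [← hu] at hh; exact hh.intervalIntegrable
  have CX : ∀ h : ℝ → ℂ, ContinuousOn h (Set.Icc 0 ℓ) → ∀ x ∈ Set.Icc 0 ℓ,
      IntervalIntegrable h volume 0 x := fun h hh x hx => gl_int_mono hx (CI h hh)
  set Q : ℝ → ℂ := fun t => ∫ s in (0:ℝ)..t, p s with hQ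
  have hQc : ContinuousOn Q (Set.Icc 0 ℓ) := prim p (CI p hpc)
  obtain ⟨M, hM⟩ := isCompact_Icc.exists_bound_of_continuousOn hpc
  have h0 : (0:ℝ) ∈ Set.Icc 0 ℓ := ⟨le_rfl, hℓ.le⟩
  have hM0 : 0 ≤ M := (norm_nonneg _).trans (hM 0 h0)
  set A := M * ℓ with hA
  have hA0 : 0 ≤ A := by positivity
  set δ := ε / (1 + 2 * A) with hδ
  have hδ0 : 0 < δ := by positivity
  obtain ⟨K1, hK1, RL1⟩ := gl_RL ℓ hℓ.le f hf δ hδ0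
  obtain ⟨K2, hK2, RL2⟩ := gl_RL ℓ hℓ.le (fun t => p t * Q t) (CI _ (hpc.mul hQc)) δ hδ0
  obtain ⟨K3, hK3, RL3⟩ := gl_RL ℓ hℓ.le p (CI _ hpc) δ hδ0
  refine ⟨K1 + K2 + K3 + 2 * A + 2 * A ^ 2 / δ, by positivity, ?_⟩
  intro k hk
  have hz : 0 ≤ 2 * A ^ 2 / δ := by positivity
  have hkA : 2 * A ≤ ‖k‖ := by linarith
  have hkδ : 2 * A ^ 2 / δ ≤ ‖k‖ := by linarith
  have hkpos : 0 < ‖k‖ := by linarith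
  have hk0 : k ≠ 0 := norm_pos_iff.1 hkpos
  replace RL1 := RL1 k (by linarith)
  replace RL2 := RL2 k (by linarith)
  replace RL3 := RL3 k (by linarith)
  replace hc := hc k hk0
  replace hccont := hccont k hk0
  replace hcderiv := hcderiv k hk0
  set τ := |k.im| with hτ
  set C := c k with hC
  -- kernel bounds
  have sinb : ∀ x : ℝ, ∀ t ∈ Set.Icc 0 x, ‖Complex.sin (k * ((x:ℂ) - t))‖ ≤ Real.exp (τ * (x - t)) := by
    intro x t ht
    have := gl_sin_bound (k := k) (x := x - t) (u := x - t) (abs_of_nonneg (by linarith [ht.2])).le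
    push_cast at this; exact this
  have cosb : ∀ x : ℝ, ∀ t ∈ Set.Icc 0 x, ‖Complex.cos (k * ((x:ℂ) - t))‖ ≤ Real.exp (τ * (x - t)) := by
    intro x t ht
    have := gl_cos_bound (k := k) (x := x - t) (u := x - t) (abs_of_nonneg (by linarith [ht.2])).le
    push_cast at this; exact this
  have cosb0 : ∀ t ∈ Set.Icc 0 ℓ, ‖Complex.cos (k * (t:ℂ))‖ ≤ Real.exp (τ * t) := by
    intro t ht; exact gl_cos_bound (abs_of_nonneg ht.1).le
  have sinc : ∀ x : ℝ, Continuous (fun t : ℝ => Complex.sin (k * ((x:ℂ) - t))) := by intro x; fun_prop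
  have cosc : ∀ x : ℝ, Continuous (fun t : ℝ => Complex.cos (k * ((x:ℂ) - t))) := by intro x; fun_prop
  have cosc0 : Continuous (fun t : ℝ => Complex.cos (k * (t:ℂ))) := by fun_prop
  have sinc0 : Continuous (fun t : ℝ => Complex.sin (k * (t:ℂ))) := by fun_prop
  have sin2c : ∀ x : ℝ, Continuous (fun t : ℝ => Complex.sin (k * ((x - 2 * t : ℝ):ℂ))) := by
    intro x; fun_prop
  have cos2c : ∀ x : ℝ, Continuous (fun t : ℝ => Complex.cos (k * ((x - 2 * t : ℝ):ℂ))) := by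
    intro x; fun_prop
  -- w
  set w : ℝ → ℂ := fun t => C t - Complex.cos (k * t) with hw
  have hwc : ContinuousOn w (Set.Icc 0 ℓ) := hccont.sub cosc0.continuousOn
  have hweq : ∀ x ∈ Set.Icc 0 ℓ, w x = (∫ t in (0:ℝ)..x, Complex.sin (k * ((x:ℂ) - t)) * p t * C t) / k := by
    intro x hx
    simp only [hw]
    rw [hc x hx, add_sub_cancel_left, ← intervalIntegral.integral_div]
    congr 1; ext t; simp only [hp]; ring
  have wbound : ∀ B : ℝ, 0 ≤ B → (∀ t ∈ Set.Icc 0 ℓ, ‖C t‖ ≤ B * Real.exp (τ * t)) →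
      ∀ x ∈ Set.Icc 0 ℓ, ‖w x‖ ≤ A * B / ‖k‖ * Real.exp (τ * x) := by
    intro B hB hCB x hx
    rw [hweq x hx, norm_div, div_mul_eq_mul_div]
    gcongr
    exact gl_volt hx hM0 hB _ p C (sinb x) hM hCB
  -- bound for C
  have hCb : ∀ t ∈ Set.Icc 0 ℓ, ‖C t‖ ≤ 2 * Real.exp (τ * t) := by
    have hcont : ContinuousOn (fun t => ‖C t‖ * Real.exp (-(τ * t))) (Set.Icc 0 ℓ) :=
      hccont.norm.mul (by fun_prop)
    obtain ⟨m, hm, hmax⟩ := isCompact_Icc.exists_isMaxOn ⟨0, h0⟩ hcont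
    set N := ‖C m‖ * Real.exp (-(τ * m)) with hN
    have hN0 : 0 ≤ N := by positivity
    have hNb : ∀ t ∈ Set.Icc 0 ℓ, ‖C t‖ ≤ N * Real.exp (τ * t) := by
      intro t ht
      have h1 : ‖C t‖ * Real.exp (-(τ * t)) ≤ N := hmax ht
      rw [Real.exp_neg, ← div_eq_mul_inv, div_le_iff₀ (Real.exp_pos _)] at h1
      exact h1
    have h1 := wbound N hN0 hNb m hm
    have h2 : ‖C m‖ ≤ (1 + A * N / ‖k‖) * Real.exp (τ * m) := by
      have e : C m = Complex.cos (k * m) + w m := by simp [hw]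
      rw [e]
      refine (norm_add_le _ _).trans ?_
      have := cosb0 m hm
      linarith
    have h3 : N ≤ 1 + A * N / ‖k‖ := by
      have h5 : N = ‖C m‖ / Real.exp (τ * m) := by rw [hN, Real.exp_neg, ← div_eq_mul_inv]
      calc N = ‖C m‖ / Real.exp (τ * m) := h5
        _ ≤ _ := by rw [div_le_iff₀ (Real.exp_pos _)]; exact h2
    have h4 : A * N / ‖k‖ ≤ N / 2 := by
      rw [div_le_iff₀ hkpos]; nlinarith
    intro t ht
    refine (hNb t ht).trans ?_
    gcongr
    linarith
  have hwb := wbound 2 (by norm_num) hCb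
  -- r
  set r : ℝ → ℂ := fun t => w t - Q t * Complex.sin (k * t) / (2 * k) with hr
  have hrc : ContinuousOn r (Set.Icc 0 ℓ) :=
    hwc.sub ((hQc.mul sinc0.continuousOn).div_const _)
  have hreq : ∀ x ∈ Set.Icc 0 ℓ, r x =
      (∫ t in (0:ℝ)..x, Complex.sin (k * ((x - 2 * t : ℝ):ℂ)) * p t) / (2 * k) +
      (∫ t in (0:ℝ)..x, Complex.sin (k * ((x:ℂ) - t)) * p t * w t) / k := by
    intro x hx
    have e : ∫ t in (0:ℝ)..x, Complex.sin (k * ((x:ℂ) - t)) * p t * C t =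
        (∫ t in (0:ℝ)..x, (1/2) * Complex.sin (k * x) * p t) +
        (∫ t in (0:ℝ)..x, (1/2) * (Complex.sin (k * ((x - 2 * t : ℝ):ℂ)) * p t)) +
        (∫ t in (0:ℝ)..x, Complex.sin (k * ((x:ℂ) - t)) * p t * w t) := by
      have i1 : IntervalIntegrable (fun t => (1/2) * Complex.sin (k * x) * p t) volume 0 x :=
        CX _ (continuousOn_const.mul hpc) x hx
      have i2 : IntervalIntegrable (fun t => (1/2) * (Complex.sin (k * ((x - 2 * t : ℝ):ℂ)) * p t)) volume 0 x :=
        CX _ (continuousOn_const.mul ((sin2c x).continuousOn.mul hpc)) x hx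
      have i3 : IntervalIntegrable (fun t => Complex.sin (k * ((x:ℂ) - t)) * p t * w t) volume 0 x :=
        CX _ (((sinc x).continuousOn.mul hpc).mul hwc) x hx
      rw [← intervalIntegral.integral_add i1 i2, ← intervalIntegral.integral_add (i1.add i2) i3]
      congr 1; ext t
      have t1 : Complex.sin (k * x) + Complex.sin (k * ((x - 2 * t : ℝ):ℂ)) =
          2 * (Complex.sin (k * ((x:ℂ) - t)) * Complex.cos (k * t)) := by
        have a1 : k * (x:ℂ) = k * ((x:ℂ) - t) + k * t := by ring
        have a2 : k * ((x - 2 * t : ℝ):ℂ) = k * ((x:ℂ) - t) - k * t := by push_cast; ring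
        rw [a1, a2, Complex.sin_add, Complex.sin_sub]; ring
      simp only [hw]
      linear_combination (-(1/2) * p t) * t1
    simp only [hr]
    rw [hweq x hx, e, intervalIntegral.integral_const_mul, intervalIntegral.integral_const_mul]
    simp only [hQ]
    field_simp
    ring
  have hrb : ∀ x ∈ Set.Icc 0 ℓ, ‖r x‖ ≤ 3 / 2 * δ / ‖k‖ * Real.exp (τ * x) := by
    intro x hx
    rw [hreq x hx]
    refine (norm_add_le _ _).trans ?_
    rw [norm_div, norm_div, norm_mul, Complex.norm_ofNat]
    have b1 := RL3 x hx
    have b2 := gl_volt hx hM0 (by positivity) _ p w (sinb x) hM hwb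
    have b3 : M * ℓ * (A * 2 / ‖k‖) ≤ δ := by
      rw [← hA, mul_div_assoc', div_le_iff₀ hkpos]
      rw [div_le_iff₀ hδ0] at hkδ
      nlinarith
    have b4 := b2.trans (mul_le_mul_of_nonneg_right b3 (Real.exp_pos _).le)
    calc _ ≤ δ * Real.exp (τ * x) / (2 * ‖k‖) + δ * Real.exp (τ * x) / ‖k‖ := by gcongr
      _ = _ := by field_simp; ring
  intro x hx
  -- main decomposition
  have e1 : ∫ t in (0:ℝ)..x, Complex.cos (k * ((x:ℂ) - t)) * p t * C t =
      (∫ t in (0:ℝ)..x, (1/2) * Complex.cos (k * x) * p t) +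
      (∫ t in (0:ℝ)..x, (1/2) * (Complex.cos (k * ((x - 2 * t : ℝ):ℂ)) * p t)) +
      (∫ t in (0:ℝ)..x, (1/(4*k)) * Complex.sin (k * x) * (p t * Q t)) -
      (∫ t in (0:ℝ)..x, (1/(4*k)) * (Complex.sin (k * ((x - 2 * t : ℝ):ℂ)) * (p t * Q t))) +
      (∫ t in (0:ℝ)..x, Complex.cos (k * ((x:ℂ) - t)) * p t * r t) := by
    have i1 : IntervalIntegrable (fun t => (1/2) * Complex.cos (k * x) * p t) volume 0 x :=
      CX _ (continuousOn_const.mul hpc) x hx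
    have i2 : IntervalIntegrable (fun t => (1/2) * (Complex.cos (k * ((x - 2 * t : ℝ):ℂ)) * p t)) volume 0 x :=
      CX _ (continuousOn_const.mul ((cos2c x).continuousOn.mul hpc)) x hx
    have i3 : IntervalIntegrable (fun t => (1/(4*k)) * Complex.sin (k * x) * (p t * Q t)) volume 0 x :=
      CX _ (continuousOn_const.mul (hpc.mul hQc)) x hx
    have i4 : IntervalIntegrable (fun t => (1/(4*k)) * (Complex.sin (k * ((x - 2 * t : ℝ):ℂ)) * (p t * Q t))) volume 0 x :=
      CX _ (continuousOn_const.mul ((sin2c x).continuousOn.mul (hpc.mul hQc))) x hx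
    have i5 : IntervalIntegrable (fun t => Complex.cos (k * ((x:ℂ) - t)) * p t * r t) volume 0 x :=
      CX _ (((cosc x).continuousOn.mul hpc).mul hrc) x hx
    rw [← intervalIntegral.integral_add i1 i2, ← intervalIntegral.integral_add (i1.add i2) i3,
      ← intervalIntegral.integral_sub ((i1.add i2).add i3) i4,
      ← intervalIntegral.integral_add (((i1.add i2).add i3).sub i4) i5]
    congr 1; ext t
    have a1 : k * (x:ℂ) = k * ((x:ℂ) - t) + k * t := by ring
    have a2 : k * ((x - 2 * t : ℝ):ℂ) = k * ((x:ℂ) - t) - k * t := by push_cast; ring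
    have t1 : Complex.cos (k * x) + Complex.cos (k * ((x - 2 * t : ℝ):ℂ)) =
        2 * (Complex.cos (k * ((x:ℂ) - t)) * Complex.cos (k * t)) := by
      rw [a1, a2, Complex.cos_add, Complex.cos_sub]; ring
    have t2 : Complex.sin (k * x) - Complex.sin (k * ((x - 2 * t : ℝ):ℂ)) =
        2 * (Complex.cos (k * ((x:ℂ) - t)) * Complex.sin (k * t)) := by
      rw [a1, a2, Complex.sin_add, Complex.sin_sub]; ring
    have t3 : C t = Complex.cos (k * t) + Q t * Complex.sin (k * t) / (2 * k) + r t := by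
      simp only [hr, hw]; ring
    rw [t3]
    have t4 : (2 * k)⁻¹ = 2 * (4 * k)⁻¹ := by field_simp; norm_num
    simp only [div_eq_mul_inv, t4]
    linear_combination (-(1/2) * p t) * t1 - ((4 * k)⁻¹ * p t * Q t) * t2
  -- integration by parts
  have e2 : ∫ t in (0:ℝ)..x, Complex.cos (k * ((x - 2 * t : ℝ):ℂ)) * p t =
      Complex.sin (k * x) / (2 * k) * (p x + p 0) +
      (∫ t in (0:ℝ)..x, Complex.sin (k * ((x - 2 * t : ℝ):ℂ)) * f t) / (2 * k) := by
    set φ : ℝ → ℂ := fun t => -Complex.sin (k * ((x - 2 * t : ℝ):ℂ)) / (2 * k) with hφdef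
    have hφ : ∀ t, HasDerivAt φ (Complex.cos (k * ((x - 2 * t : ℝ):ℂ))) t := by
      intro t
      have h1 : HasDerivAt (fun z : ℂ => -Complex.sin (k * (x - 2 * z)) / (2 * k))
          (-(Complex.cos (k * (x - 2 * t)) * (k * (0 - 2 * 1))) / (2 * k)) (t:ℂ) := by
        have := (((hasDerivAt_id (t:ℂ)).const_mul 2).const_sub (x:ℂ)).const_mul k
        have := (this.csin).neg.div_const (2 * k)
        simpa using this
      have h2 := h1.comp_ofReal
      convert h2 using 1
      · ext s; simp [hφdef]
      · push_cast; field_simp; ring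
    have hib := gl_ibp hx.1 (gl_int_mono hx hf) φ _ hφ (cos2c x)
    have hc0 : ∫ t in (0:ℝ)..x, Complex.cos (k * ((x - 2 * t : ℝ):ℂ)) = φ x - φ 0 :=
      intervalIntegral.integral_eq_sub_of_hasDerivAt (fun t _ => hφ t) ((cos2c x).intervalIntegrable _ _)
    have hs : ∫ t in (0:ℝ)..x, Complex.cos (k * ((x - 2 * t : ℝ):ℂ)) * p t =
        (∫ t in (0:ℝ)..x, Complex.cos (k * ((x - 2 * t : ℝ):ℂ)) * p 0) +
        ∫ t in (0:ℝ)..x, Complex.cos (k * ((x - 2 * t : ℝ):ℂ)) * ∫ s in (0:ℝ)..t, f s := by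
      have i1 : IntervalIntegrable (fun t => Complex.cos (k * ((x - 2 * t : ℝ):ℂ)) * p 0) volume 0 x :=
        CX _ ((cos2c x).continuousOn.mul continuousOn_const) x hx
      have i2 : IntervalIntegrable (fun t => Complex.cos (k * ((x - 2 * t : ℝ):ℂ)) * ∫ s in (0:ℝ)..t, f s) volume 0 x :=
        CX _ ((cos2c x).continuousOn.mul (prim f hf)) x hx
      rw [← intervalIntegral.integral_add i1 i2]
      apply intervalIntegral.integral_congr
      intro t ht
      rw [Set.uIcc_of_le hx.1] at ht
      simp only
      rw [hpf t ⟨ht.1, ht.2.trans hx.2⟩]; ring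
    have hφf : ∫ t in (0:ℝ)..x, φ t * f t =
        -(∫ t in (0:ℝ)..x, Complex.sin (k * ((x - 2 * t : ℝ):ℂ)) * f t) / (2 * k) := by
      rw [← intervalIntegral.integral_neg, ← intervalIntegral.integral_div]
      congr 1; ext t; simp only [hφdef]; ring
    have hφx : φ x = Complex.sin (k * x) / (2 * k) := by
      simp only [hφdef]
      have : k * ((x - 2 * x : ℝ):ℂ) = -(k * x) := by push_cast; ring
      rw [this, Complex.sin_neg, neg_neg]
    have hφ0 : φ 0 = -Complex.sin (k * x) / (2 * k) := by
      simp [hφdef]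
    rw [hs, intervalIntegral.integral_mul_const, hib, hc0, hφf, hφx, hφ0, hpf x hx]
    ring
  have e3 := gl_sq hx.1 (hpc.mono (Set.Icc_subset_Icc_right hx.2))
  have e4 : ∫ t in (0:ℝ)..x, p t * Q t = Q x ^ 2 / 2 := e3
  set I1 := ∫ t in (0:ℝ)..x, Complex.sin (k * ((x - 2 * t : ℝ):ℂ)) * f t with hI1
  set I2 := ∫ t in (0:ℝ)..x, Complex.sin (k * ((x - 2 * t : ℝ):ℂ)) * (p t * Q t) with hI2
  set I3 := ∫ t in (0:ℝ)..x, Complex.cos (k * ((x:ℂ) - t)) * p t * r t with hI3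
  have b1 : ‖I1‖ ≤ δ * Real.exp (τ * x) := RL1 x hx
  have b2 : ‖I2‖ ≤ δ * Real.exp (τ * x) := RL2 x hx
  have b3 : ‖I3‖ ≤ M * ℓ * (3 / 2 * δ / ‖k‖) * Real.exp (τ * x) :=
    gl_volt hx hM0 (by positivity) _ p r (cosb x) hM hrb
  have etot : cderiv k x + k * Complex.sin (k * x)
          - Complex.cos (k * x) * ((1 / 2 : ℂ) * Q x)
          - (Complex.sin (k * x) / k) * ((1 / 4 : ℂ) * (p x + p 0) + (1 / 8 : ℂ) * (Q x) ^ 2)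
      = I1 / (4 * k) - I2 / (4 * k) + I3 := by
    have hd : cderiv k x = -k * Complex.sin (k * x) +
        ∫ t in (0:ℝ)..x, Complex.cos (k * ((x:ℂ) - t)) * p t * C t := hcderiv x hx
    rw [hd, e1]
    simp only [intervalIntegral.integral_const_mul]
    rw [← hI2, e2, e4]
    have : ∫ t in (0:ℝ)..x, p t = Q x := rfl
    rw [this]
    field_simp
    ring
  change ‖cderiv k x + k * Complex.sin (k * x)
          - Complex.cos (k * x) * ((1 / 2 : ℂ) * Q x)
          - (Complex.sin (k * x) / k) * ((1 / 4 : ℂ) * (p x + p 0) + (1 / 8 : ℂ) * (Q x) ^ 2)‖ ≤ _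
  rw [etot]
  calc ‖I1 / (4 * k) - I2 / (4 * k) + I3‖ ≤ ‖I1 / (4 * k)‖ + ‖I2 / (4 * k)‖ + ‖I3‖ :=
        (norm_add_le _ _).trans (by gcongr; exact norm_sub_le _ _)
    _ ≤ δ * Real.exp (τ * x) / (4 * ‖k‖) + δ * Real.exp (τ * x) / (4 * ‖k‖) +
        M * ℓ * (3 / 2 * δ / ‖k‖) * Real.exp (τ * x) := by
        rw [norm_div, norm_div, norm_mul, Complex.norm_ofNat]
        gcongr
    _ = (1 / 2 + 3 / 2 * A) * δ * Real.exp (τ * x) / ‖k‖ := by rw [hA]; field_simp; ring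
    _ ≤ ε * Real.exp (τ * x) / ‖k‖ := by
        gcongr
        rw [hδ, mul_div_assoc', div_le_iff₀ (by positivity)]
        nlinarith
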